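/- Orthonormal eigenvectors of the symmetrized matrix: define Z_{ij} = √(π_j)·T_{ij}/√(π_i) and w_k(i) = Δ_k·c_k(i)/√(π_i), where Δ_k² = (Σ_{i=0}^{N_w} c_k(i)²/π_i)^{−1}, Δ_k > 0. Then (i) Σ_{i=0}^{N_w} w_k(i)·w_l(i) = δ_{kl} for all k, l ∈ {0,...,N_w}, and (ii) Σ_{j=0}^{N_w} Z_{ij}·w_k(j) = λ_k·w_k(i) for all i and k, where λ_k = 1 − k(N+1−k)/(N1·N2). -/

import Mathlib

/-!
The generating function of `c_k` is `(1 - x) ^ k * ₂F₁(k - N1, k - Nw; N2 - Nw + 1; x)`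
(`cBL_eq_coeff`). The hypergeometric equation (`ode_of_rec`), conjugated by `(1 - x) ^ k`
(`ode_conj`), becomes a second-order equation whose coefficients (`rec_of_ode`) give exactly the
three-term recurrence `T c_k = λ_k c_k`; it closes at the upper boundary because `c_k(Nw + 1) = 0`
(`cBL_last`). Conjugating by `√π` turns this into `Z w_k = λ_k w_k`.

Detailed balance (`TBL_balance`) makes `Z` symmetric, and the `λ_k` are pairwise distinct for
`k ≤ Nw` (`lamBL_inj`), so the `w_k` are orthogonal; `Δ_k` normalizes them, the sum defining it
being positive since `c_k(0) = 1`.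
-/

open Finset

noncomputable section

/-- Rising factorial (Pochhammer symbol) `a (a+1) ⋯ (a+m-1)` in `ℚ`. -/
def rfQ (a : ℚ) : ℕ → ℚ
  | 0 => 1
  | m + 1 => rfQ a m * (a + m)

/-- Components `c_k(i)` of the `k`-th right eigenvector of the BL transition matrix. -/
def cBL (N1 N2 Nw : ℕ) (k i : ℕ) : ℝ :=
  ((∑ n ∈ Finset.range (min k i + 1),
    (Nat.choose k n : ℚ) * (-1) ^ n
      * rfQ ((k : ℚ) - N1) (i - n) * rfQ ((k : ℚ) - Nw) (i - n)
      / (rfQ ((N2 : ℚ) - Nw + 1) (i - n) * (Nat.factorial (i - n) : ℚ)) : ℚ) : ℝ)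

/-- Up-transition probability `p_j` of the BL model. -/
def pBL (N1 N2 Nw : ℕ) (j : ℕ) : ℝ :=
  ((N1 : ℝ) - j) * ((Nw : ℝ) - j) / ((N1 : ℝ) * N2)

/-- Down-transition probability `q_j` of the BL model. -/
def qBL (N1 N2 Nb : ℕ) (j : ℕ) : ℝ :=
  (j : ℝ) * ((Nb : ℝ) - N1 + j) / ((N1 : ℝ) * N2)

/-- The Bernoulli–Laplace transition matrix `T`. -/
def TBL (N1 N2 Nw Nb : ℕ) : Matrix (Fin (Nw + 1)) (Fin (Nw + 1)) ℝ :=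
  fun i j =>
    if (i : ℕ) = (j : ℕ) + 1 then pBL N1 N2 Nw j
    else if (i : ℕ) + 1 = (j : ℕ) then qBL N1 N2 Nb j
    else if (i : ℕ) = (j : ℕ) then 1 - pBL N1 N2 Nw j - qBL N1 N2 Nb j
    else 0

/-- Eigenvalue `λ_k = 1 - k (N+1-k) / (N1 N2)`. -/
def lamBL (N1 N2 N : ℕ) (k : ℕ) : ℝ :=
  1 - (k : ℝ) * ((N : ℝ) + 1 - k) / ((N1 : ℝ) * N2)

/-- The hypergeometric stationary distribution `π_i = C(Nw,i) C(N-Nw,N1-i) / C(N,N1)`. -/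
def piBL (N1 Nw N : ℕ) (i : ℕ) : ℝ :=
  (Nat.choose Nw i : ℝ) * (Nat.choose (N - Nw) (N1 - i) : ℝ) / (Nat.choose N N1 : ℝ)

/-- The orthogonal measure `Δ_k² = (Σ_i c_k(i)²/π_i)⁻¹`. -/
def DeltaSqBL (N1 N2 Nw N : ℕ) (k : ℕ) : ℝ :=
  (∑ i ∈ Finset.range (Nw + 1), (cBL N1 N2 Nw k i) ^ 2 / piBL N1 Nw N i)⁻¹

/-- `Δ_k > 0`, the positive square root of `Δ_k²`. -/
def DeltaBL (N1 N2 Nw N : ℕ) (k : ℕ) : ℝ :=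
  Real.sqrt (DeltaSqBL N1 N2 Nw N k)

/-- Right eigenvectors of the symmetrized matrix: `v_k(i) = Δ_k c_k(i) / π_i`. -/
def vBL (N1 N2 Nw N : ℕ) (k i : ℕ) : ℝ :=
  DeltaBL N1 N2 Nw N k * cBL N1 N2 Nw k i / piBL N1 Nw N i

/-- Orthonormal eigenvectors of the symmetrized matrix: `w_k(i) = Δ_k c_k(i) / √(π_i)`. -/
def wBL (N1 N2 Nw N : ℕ) (k i : ℕ) : ℝ :=
  DeltaBL N1 N2 Nw N k * cBL N1 N2 Nw k i / Real.sqrt (piBL N1 Nw N i)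
/-- The symmetrized matrix `Z_{ij} = √(π_j) T_{ij} / √(π_i)`. -/
def ZBL (N1 N2 Nw Nb N : ℕ) : Matrix (Fin (Nw + 1)) (Fin (Nw + 1)) ℝ :=
  fun i j =>
    Real.sqrt (piBL N1 Nw N j) * TBL N1 N2 Nw Nb i j / Real.sqrt (piBL N1 Nw N i)

/-! ### Differential equations for power series -/

open PowerSeries in
/-- The hypergeometric operator conjugated by `(1 - X) ^ k`: if `F` satisfies the hypergeometric
equation with parameters `k - A`, `k - B`; `d + 1`, then `(1 - X) ^ k * F` satisfies the
differential equation that encodes the Bernoulli–Laplace eigenproblem on generating functions. -/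
lemma ode_conj (A B d : ℚ) (k : ℕ) (F : PowerSeries ℚ)
    (hF : X * (1 - X) * d⁄dX ℚ (d⁄dX ℚ F)
      + ((C d + 1) - (2 * (k : PowerSeries ℚ) - C A - C B + 1) * X) * d⁄dX ℚ F
      - ((k : PowerSeries ℚ) - C A) * ((k : PowerSeries ℚ) - C B) * F = 0)
    (G : PowerSeries ℚ) (hG : G = (1 - X) ^ k * F) :
    X * (1 - X) ^ 2 * d⁄dX ℚ (d⁄dX ℚ G)
      + ((C d + 1) + (C A + C B - 1) * X) * ((1 - X) * d⁄dX ℚ G)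
      + ((k : PowerSeries ℚ) * (C A + C B + C d + 1 - (k : PowerSeries ℚ)) - C A * C B * (1 - X)) * G = 0 := by
  have hu : d⁄dX ℚ (1 - X : PowerSeries ℚ) = -1 := by
    simp [PowerSeries.derivative_X]
  have hpow : (1 - X) * d⁄dX ℚ ((1 - X : PowerSeries ℚ) ^ k)
      = -(k : PowerSeries ℚ) * (1 - X) ^ k := by
    rcases k with _ | k
    · simp
    · rw [Derivation.leibniz_pow, hu]
      simp [pow_succ]; ring
  have h1 : (1 - X) * d⁄dX ℚ G = (1 - X) ^ k * ((1 - X) * d⁄dX ℚ F - (k : PowerSeries ℚ) * F) := by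
    rw [hG, Derivation.leibniz]
    simp only [smul_eq_mul]
    linear_combination F * hpow
  have h2 : (1 - X) ^ 2 * d⁄dX ℚ (d⁄dX ℚ G) = (1 - X) ^ k *
      ((1 - X) ^ 2 * d⁄dX ℚ (d⁄dX ℚ F) - 2 * (k : PowerSeries ℚ) * ((1 - X) * d⁄dX ℚ F)
        + (k : PowerSeries ℚ) * ((k : PowerSeries ℚ) - 1) * F) := by
    have h3 := congrArg (d⁄dX ℚ) h1
    have hk : d⁄dX ℚ (k : PowerSeries ℚ) = 0 := by simp
    simp only [Derivation.leibniz, map_sub, hu, hk, smul_eq_mul] at h3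
    linear_combination (1 - X) * h3 + h1 + ((1 - X) * d⁄dX ℚ F - (k : PowerSeries ℚ) * F) * hpow
  linear_combination X * h2 + ((C d + 1) + (C A + C B - 1) * X) * h1 + (1 - X) ^ (k + 1) * hF
    + ((k : PowerSeries ℚ) * (C A + C B + C d + 1 - (k : PowerSeries ℚ)) - C A * C B * (1 - X)) * hG

open PowerSeries in
lemma coeff_X_mul_deriv (F : PowerSeries ℚ) (n : ℕ) :
    coeff n (X * d⁄dX ℚ F) = n * coeff n F := by
  rcases n with _ | n
  · simp
  · rw [coeff_succ_X_mul, coeff_derivative]; push_cast; ring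

open PowerSeries in
lemma coeff_X_sq_mul_deriv (F : PowerSeries ℚ) (n : ℕ) :
    coeff n (X * (X * d⁄dX ℚ (d⁄dX ℚ F))) = n * (n - 1) * coeff n F := by
  rcases n with _ | n
  · simp
  · rw [coeff_succ_X_mul, coeff_X_mul_deriv, coeff_derivative]; push_cast; ring

open PowerSeries in
/-- Hypergeometric equation for a power series from the two-term recurrence of its coefficients. -/
lemma ode_of_rec (A B d : ℚ) (k : ℕ) (a : ℕ → ℚ)
    (ha : ∀ m : ℕ, ((m : ℚ) + 1) * (d + 1 + m) * a (m + 1) = (k - A + m) * (k - B + m) * a m) :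
    X * (1 - X) * d⁄dX ℚ (d⁄dX ℚ (PowerSeries.mk a))
      + ((C d + 1) - (2 * (k : PowerSeries ℚ) - C A - C B + 1) * X) * d⁄dX ℚ (PowerSeries.mk a)
      - ((k : PowerSeries ℚ) - C A) * ((k : PowerSeries ℚ) - C B) * PowerSeries.mk a = 0 := by
  have hk : (k : PowerSeries ℚ) = C (k : ℚ) := by simp
  have : X * (1 - X) * d⁄dX ℚ (d⁄dX ℚ (PowerSeries.mk a))
      + ((C d + 1) - (2 * (k : PowerSeries ℚ) - C A - C B + 1) * X) * d⁄dX ℚ (PowerSeries.mk a)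
      - ((k : PowerSeries ℚ) - C A) * ((k : PowerSeries ℚ) - C B) * PowerSeries.mk a
      = X * d⁄dX ℚ (d⁄dX ℚ (PowerSeries.mk a)) - X * (X * d⁄dX ℚ (d⁄dX ℚ (PowerSeries.mk a)))
        + C (d + 1) * d⁄dX ℚ (PowerSeries.mk a) - C (2 * k - A - B + 1) * (X * d⁄dX ℚ (PowerSeries.mk a))
        - C ((k - A) * (k - B)) * PowerSeries.mk a := by
    rw [hk]; simp only [map_sub, map_add, map_mul, map_one, map_ofNat]; ring
  rw [this]
  ext n
  simp only [LinearMap.map_sub, LinearMap.map_add, coeff_C_mul, coeff_X_mul_deriv, coeff_X_sq_mul_deriv,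
    coeff_derivative, coeff_mk, map_zero]
  linear_combination ha n

open PowerSeries in
/-- The three-term recurrence read off from the differential equation of `ode_conj`; the term with
index `i - 1` is absent at `i = 0`. -/
lemma rec_of_ode (A B d : ℚ) (k : ℕ) (G : PowerSeries ℚ)
    (h : X * (1 - X) ^ 2 * d⁄dX ℚ (d⁄dX ℚ G)
      + ((C d + 1) + (C A + C B - 1) * X) * ((1 - X) * d⁄dX ℚ G)
      + ((k : PowerSeries ℚ) * (C A + C B + C d + 1 - (k : PowerSeries ℚ)) - C A * C B * (1 - X)) * G = 0)
    (i : ℕ) :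
    (if i = 0 then 0 else (A - (i - 1 : ℕ)) * (B - (i - 1 : ℕ)) * coeff (i - 1) G)
      + (i + 1) * (d + i + 1) * coeff (i + 1) G
      - ((A - i) * (B - i) + i * (d + i)) * coeff i G
      = - (k * (A + B + d + 1 - k)) * coeff i G := by
  have hk : (k : PowerSeries ℚ) = C (k : ℚ) := by simp
  have key : X * d⁄dX ℚ (d⁄dX ℚ G) + C (d + 1) * d⁄dX ℚ G
      + X * (C (A * B) * G - C (A + B - 1) * (X * d⁄dX ℚ G) + X * (X * d⁄dX ℚ (d⁄dX ℚ G)))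
      - (C (A * B) * G + C (d + 2 - A - B) * (X * d⁄dX ℚ G)
        + C 2 * (X * (X * d⁄dX ℚ (d⁄dX ℚ G))))
      + C (k * (A + B + d + 1 - k)) * G = 0 := by
    rw [hk] at h
    simp only [map_sub, map_add, map_mul, map_one, map_ofNat]
    linear_combination h
  have h := congrArg (coeff i) key
  rcases i with _ | i
  · simp only [LinearMap.map_sub, LinearMap.map_add, coeff_C_mul, coeff_derivative, map_zero,
      coeff_zero_X_mul] at h
    simp only [if_true]
    push_cast at h ⊢
    linear_combination h
  · simp only [LinearMap.map_sub, LinearMap.map_add, coeff_C_mul, coeff_X_mul_deriv, coeff_X_sq_mul_deriv,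
      coeff_derivative, map_zero, coeff_succ_X_mul] at h
    simp only [Nat.succ_ne_zero, if_false, Nat.add_sub_cancel]
    push_cast at h ⊢
    linear_combination h

/-! ### The eigenvectors of `T` -/

/-- Coefficients of the hypergeometric series `₂F₁(k - N1, k - Nw; N2 - Nw + 1; x)`. -/
def aBL (N1 N2 Nw k m : ℕ) : ℚ :=
  rfQ ((k : ℚ) - N1) m * rfQ ((k : ℚ) - Nw) m / (rfQ ((N2 : ℚ) - Nw + 1) m * (m.factorial : ℚ))

lemma rfQ_pos {a : ℚ} (ha : 0 < a) (m : ℕ) : 0 < rfQ a m := by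
  induction m with
  | zero => simp [rfQ]
  | succ m ih => rw [rfQ]; positivity

lemma aBL_rec (N1 N2 Nw k : ℕ) (hw2 : Nw ≤ N2) (m : ℕ) :
    ((m : ℚ) + 1) * (((N2 : ℚ) - Nw) + 1 + m) * aBL N1 N2 Nw k (m + 1)
      = (k - N1 + m) * (k - Nw + m) * aBL N1 N2 Nw k m := by
  have h2 : (Nw : ℚ) ≤ N2 := by exact_mod_cast hw2
  have hd : (0 : ℚ) < (N2 : ℚ) - Nw + 1 := by linarith
  have h1 := (rfQ_pos hd m).ne'
  have h3 : ((N2 : ℚ) - Nw + 1 + m) ≠ 0 := by positivity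
  have h4 : (m.factorial : ℚ) ≠ 0 := by exact_mod_cast m.factorial_ne_zero
  have h5 : (m : ℚ) + 1 ≠ 0 := by positivity
  simp only [aBL, rfQ, Nat.factorial_succ]
  push_cast
  field_simp

/-- A rising factorial of `-s` with more than `s` factors vanishes. -/
lemma rfQ_eq_zero (s : ℕ) {m : ℕ} (h : s < m) : rfQ (-(s : ℚ)) m = 0 := by
  induction m with
  | zero => omega
  | succ m ih =>
    rw [rfQ]
    rcases (Nat.lt_succ_iff.mp h).eq_or_lt with rfl | h'
    · simp
    · rw [ih h', zero_mul]

open PowerSeries in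
lemma coeff_one_sub_X_pow' (k n : ℕ) :
    coeff n ((1 - X : PowerSeries ℚ) ^ k) = (k.choose n : ℚ) * (-1) ^ n := by
  induction k generalizing n with
  | zero => rcases n with _ | n <;> simp [coeff_one]
  | succ k ih =>
    rw [pow_succ', sub_mul, one_mul, map_sub, ih]
    rcases n with _ | n
    · simp
    · rw [coeff_succ_X_mul, ih, Nat.choose_succ_succ]; push_cast; ring

open PowerSeries in
/-- `c_k(i)` is the `i`-th coefficient of
`(1 - x) ^ k * ₂F₁(k - N1, k - Nw; N2 - Nw + 1; x)`. -/
lemma cBL_eq_coeff (N1 N2 Nw k i : ℕ) :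
    cBL N1 N2 Nw k i
      = ((coeff i ((1 - X : PowerSeries ℚ) ^ k * PowerSeries.mk (aBL N1 N2 Nw k)) : ℚ) : ℝ) := by
  rw [cBL, coeff_mul, Finset.Nat.sum_antidiagonal_eq_sum_range_succ_mk]
  norm_cast
  simp only [coeff_one_sub_X_pow', coeff_mk]
  have hsub : Finset.range (min k i + 1) ⊆ Finset.range (i + 1) :=
    Finset.range_mono (by omega)
  rw [← Finset.sum_subset hsub]
  · refine Finset.sum_congr rfl fun n _ => ?_
    rw [aBL]; push_cast; ring
  · intro n hn hn'
    simp only [Finset.mem_range] at hn hn'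
    rw [Nat.choose_eq_zero_of_lt (by omega)]; simp

lemma cBL_rec (N1 N2 Nw k : ℕ) (hw2 : Nw ≤ N2) (i : ℕ) :
    (if i = 0 then 0 else
        ((N1 : ℝ) - (i - 1 : ℕ)) * ((Nw : ℝ) - (i - 1 : ℕ)) * cBL N1 N2 Nw k (i - 1))
      + (i + 1) * (((N2 : ℝ) - Nw) + i + 1) * cBL N1 N2 Nw k (i + 1)
      - (((N1 : ℝ) - i) * ((Nw : ℝ) - i) + i * (((N2 : ℝ) - Nw) + i)) * cBL N1 N2 Nw k i
      = - (k * ((N1 : ℝ) + Nw + (N2 - Nw) + 1 - k)) * cBL N1 N2 Nw k i := by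
  have h := rec_of_ode N1 Nw (N2 - Nw) k _
    (ode_conj N1 Nw (N2 - Nw) k _ (ode_of_rec N1 Nw (N2 - Nw) k _ (aBL_rec N1 N2 Nw k hw2)) _ rfl) i
  simp only [cBL_eq_coeff]
  rcases i with _ | i
  · simp only [if_true] at h ⊢
    exact_mod_cast congrArg (fun x : ℚ => (x : ℝ)) h
  · simp only [Nat.succ_ne_zero, if_false] at h ⊢
    exact_mod_cast congrArg (fun x : ℚ => (x : ℝ)) h

lemma cBL_zero (N1 N2 Nw k : ℕ) : cBL N1 N2 Nw k 0 = 1 := by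
  simp [cBL, rfQ]

/-- The generating polynomial of `c_k` has degree at most `Nw`, so the recurrence closes at the
upper boundary. -/
lemma cBL_last (N1 N2 Nw k : ℕ) (hk : k ≤ Nw) : cBL N1 N2 Nw k (Nw + 1) = 0 := by
  rw [cBL]
  norm_cast
  refine Finset.sum_eq_zero fun n hn => ?_
  have hn' : n ≤ k := by simp only [Finset.mem_range] at hn; omega
  have : rfQ ((k : ℚ) - Nw) (Nw + 1 - n) = 0 := by
    have := rfQ_eq_zero (Nw - k) (m := Nw + 1 - n) (by omega)
    rwa [Nat.cast_sub hk, neg_sub] at this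
  simp [this]

/-- `c_k` is a right eigenvector of `T` with eigenvalue `λ_k`. -/
lemma TBL_mul_cBL (N1 N2 Nw Nb N : ℕ)
    (hN1 : 1 ≤ N1) (hN2 : 1 ≤ N2) (hN : N = N1 + N2) (hwb : Nw + Nb = N)
    (hw2 : Nw ≤ N2) (k : ℕ) (hk : k ≤ Nw) (i : Fin (Nw + 1)) :
    ∑ j : Fin (Nw + 1), TBL N1 N2 Nw Nb i j * cBL N1 N2 Nw k j
      = lamBL N1 N2 N k * cBL N1 N2 Nw k i := by
  obtain ⟨i, hi⟩ := i
  have hNb : (Nb : ℝ) = N1 + N2 - Nw := by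
    have : (Nw : ℝ) + Nb = N1 + N2 := by exact_mod_cast hwb.trans hN
    linarith
  have hNr : (N : ℝ) = N1 + N2 := by exact_mod_cast hN
  have h1 : (N1 : ℝ) ≠ 0 := by positivity
  have h2 : (N2 : ℝ) ≠ 0 := by positivity
  simp only [TBL]
  rw [Fin.sum_univ_eq_sum_range (fun j => (if i = j + 1 then pBL N1 N2 Nw j
    else if i + 1 = j then qBL N1 N2 Nb j
    else if i = j then 1 - pBL N1 N2 Nw j - qBL N1 N2 Nb j else 0) * cBL N1 N2 Nw k j) (Nw + 1)]
  -- The summand at `j = Nw + 1` vanishes, so the range may be enlarged to contain `i + 1`.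
  have hext := Finset.sum_range_succ (fun j => (if i = j + 1 then pBL N1 N2 Nw j
    else if i + 1 = j then qBL N1 N2 Nb j
    else if i = j then 1 - pBL N1 N2 Nw j - qBL N1 N2 Nb j else 0) * cBL N1 N2 Nw k j) (Nw + 1)
  rw [cBL_last N1 N2 Nw k hk, mul_zero, add_zero] at hext
  rw [← hext]
  have hsplit : ∀ j, (if i = j + 1 then pBL N1 N2 Nw j
      else if i + 1 = j then qBL N1 N2 Nb j
      else if i = j then 1 - pBL N1 N2 Nw j - qBL N1 N2 Nb j else 0) * cBL N1 N2 Nw k j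
      = (if i - 1 = j then
          (if i = 0 then 0 else pBL N1 N2 Nw (i - 1) * cBL N1 N2 Nw k (i - 1)) else 0)
        + (if i + 1 = j then qBL N1 N2 Nb (i + 1) * cBL N1 N2 Nw k (i + 1) else 0)
        + (if i = j then (1 - pBL N1 N2 Nw i - qBL N1 N2 Nb i) * cBL N1 N2 Nw k i else 0) := by
    intro j
    by_cases ha : i = j + 1
    · subst ha
      have : ¬ (j + 1 + 1 = j) := by omega
      simp [this]
    · by_cases hb : i + 1 = j
      · subst hb
        have : ¬ (i - 1 = i + 1) := by omega
        simp [this, ha]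
      · by_cases hc : i = j
        · subst hc
          rcases i with _ | i <;> simp
        · simp only [ha, hb, hc, if_false, zero_mul, add_zero]
          by_cases hd : i - 1 = j
          · have : i = 0 := by omega
            simp [this]
          · simp [hd]
  simp only [hsplit, Finset.sum_add_distrib, Finset.sum_ite_eq, Finset.mem_range]
  rw [if_pos (show i - 1 < Nw + 1 + 1 by omega), if_pos (show i + 1 < Nw + 1 + 1 by omega),
    if_pos (show i < Nw + 1 + 1 by omega)]
  have h := cBL_rec N1 N2 Nw k hw2 i
  have hp : (if i = 0 then 0 else pBL N1 N2 Nw (i - 1) * cBL N1 N2 Nw k (i - 1))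
      = (if i = 0 then 0 else ((N1 : ℝ) - (i - 1 : ℕ)) * ((Nw : ℝ) - (i - 1 : ℕ))
          * cBL N1 N2 Nw k (i - 1)) / (N1 * N2) := by
    split_ifs
    · simp
    · rw [pBL]; ring
  rw [hp, pBL, qBL, qBL, lamBL, hNb, hNr]
  push_cast
  field_simp
  linear_combination h

/-! ### Detailed balance and the symmetrized matrix -/

lemma piBL_pos (N1 N2 Nw N i : ℕ) (hN : N = N1 + N2)
    (hw2 : Nw ≤ N2) (hi : i ≤ Nw) : 0 < piBL N1 Nw N i := by
  have h1 : 0 < Nat.choose Nw i := Nat.choose_pos hi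
  have h2 : 0 < Nat.choose (N - Nw) (N1 - i) := Nat.choose_pos (by omega)
  have h3 : 0 < Nat.choose N N1 := Nat.choose_pos (by omega)
  rw [piBL]; positivity

/-- Detailed balance between neighbouring states. -/
lemma balance (N1 N2 Nw Nb N j : ℕ) (hN : N = N1 + N2) (hwb : Nw + Nb = N)
    (hw1 : Nw ≤ N1) (hw2 : Nw ≤ N2) (hj : j + 1 ≤ Nw) :
    pBL N1 N2 Nw j * piBL N1 Nw N j = qBL N1 N2 Nb (j + 1) * piBL N1 Nw N (j + 1) := by
  have hb : N - Nw = Nb := by omega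
  obtain ⟨s, rfl⟩ : ∃ s, N1 = j + 1 + s := ⟨N1 - (j + 1), by omega⟩
  obtain ⟨t, rfl⟩ : ∃ t, Nb = s + t := ⟨Nb - s, by omega⟩
  obtain ⟨u, rfl⟩ : ∃ u, Nw = j + u := ⟨Nw - j, by omega⟩
  have e1 : (j + u).choose (j + 1) * (j + 1) = (j + u).choose j * u := by
    rw [Nat.choose_succ_right_eq]; congr 1; omega
  have e2 : (s + t).choose (s + 1) * (s + 1) = (s + t).choose s * t := by
    rw [Nat.choose_succ_right_eq]; congr 1; omega
  have e1' : ((j + u).choose (j + 1) : ℝ) * (j + 1) = (j + u).choose j * u := by exact_mod_cast e1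
  have e2' : ((s + t).choose (s + 1) : ℝ) * (s + 1) = (s + t).choose s * t := by exact_mod_cast e2
  rw [pBL, qBL, piBL, piBL, hb, show j + 1 + s - j = s + 1 by omega,
    show j + 1 + s - (j + 1) = s by omega]
  rw [div_mul_div_comm, div_mul_div_comm]
  congr 1
  push_cast
  linear_combination (-(((s + t).choose s : ℝ) * t)) * e1'
    + ((j + u).choose j * u : ℝ) * e2'

lemma TBL_balance (N1 N2 Nw Nb N : ℕ) (hN : N = N1 + N2) (hwb : Nw + Nb = N)
    (hw1 : Nw ≤ N1) (hw2 : Nw ≤ N2) (i j : Fin (Nw + 1)) :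
    TBL N1 N2 Nw Nb i j * piBL N1 Nw N j = TBL N1 N2 Nw Nb j i * piBL N1 Nw N i := by
  obtain ⟨i, hi⟩ := i
  obtain ⟨j, hj⟩ := j
  simp only [TBL]
  by_cases ha : i = j + 1
  · subst ha
    have : ¬ (j = j + 1 + 1) := by omega
    simp only [if_true, this, if_false]
    exact balance N1 N2 Nw Nb N j hN hwb hw1 hw2 (by omega)
  · by_cases hb : j = i + 1
    · subst hb
      simp only [if_true, ha, if_false]
      exact (balance N1 N2 Nw Nb N i hN hwb hw1 hw2 (by omega)).symm
    · by_cases hc : i = j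
      · subst hc; rfl
      · simp [ha, hb, hc, Ne.symm ha, Ne.symm hb, Ne.symm hc]

lemma ZBL_symm (N1 N2 Nw Nb N : ℕ) (hN : N = N1 + N2) (hwb : Nw + Nb = N)
    (hw1 : Nw ≤ N1) (hw2 : Nw ≤ N2) (i j : Fin (Nw + 1)) :
    ZBL N1 N2 Nw Nb N i j = ZBL N1 N2 Nw Nb N j i := by
  have hi := piBL_pos N1 N2 Nw N i hN hw2 (by omega)
  have hj := piBL_pos N1 N2 Nw N j hN hw2 (by omega)
  have hi' := (Real.sqrt_pos.mpr hi).ne'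
  have hj' := (Real.sqrt_pos.mpr hj).ne'
  simp only [ZBL]
  rw [div_eq_div_iff hi' hj']
  have h := TBL_balance N1 N2 Nw Nb N hN hwb hw1 hw2 i j
  rw [← Real.mul_self_sqrt hi.le, ← Real.mul_self_sqrt hj.le] at h
  linear_combination h

lemma ZBL_mul_wBL (N1 N2 Nw Nb N : ℕ)
    (hN1 : 1 ≤ N1) (hN2 : 1 ≤ N2) (hN : N = N1 + N2) (hwb : Nw + Nb = N)
    (hw2 : Nw ≤ N2) (k : ℕ) (hk : k ≤ Nw) (i : Fin (Nw + 1)) :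
    ∑ j : Fin (Nw + 1), ZBL N1 N2 Nw Nb N i j * wBL N1 N2 Nw N k j
      = lamBL N1 N2 N k * wBL N1 N2 Nw N k i := by
  have hterm : ∀ j : Fin (Nw + 1), ZBL N1 N2 Nw Nb N i j * wBL N1 N2 Nw N k j
      = DeltaBL N1 N2 Nw N k / Real.sqrt (piBL N1 Nw N i)
        * (TBL N1 N2 Nw Nb i j * cBL N1 N2 Nw k j) := by
    intro j
    have hj' := (Real.sqrt_pos.mpr
      (piBL_pos N1 N2 Nw N j hN hw2 (by omega))).ne'
    simp only [ZBL, wBL]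
    field_simp
  simp only [hterm, ← Finset.mul_sum]
  rw [TBL_mul_cBL N1 N2 Nw Nb N hN1 hN2 hN hwb hw2 k hk i, wBL]
  ring

/-! ### Orthonormality -/

/-- The eigenvalues `λ_0, …, λ_Nw` are pairwise distinct, since
`N1 N2 (λ_l - λ_k) = (k - l) (N + 1 - k - l)` and `k + l ≤ 2 Nw ≤ N`. -/
lemma lamBL_inj (N1 N2 Nw N : ℕ) (hN1 : 1 ≤ N1) (hN2 : 1 ≤ N2) (hN : N = N1 + N2)
    (hw1 : Nw ≤ N1) (hw2 : Nw ≤ N2) (k l : ℕ) (hk : k ≤ Nw) (hl : l ≤ Nw)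
    (h : lamBL N1 N2 N k = lamBL N1 N2 N l) : k = l := by
  have h1 : (N1 : ℝ) ≠ 0 := by positivity
  have h2 : (N2 : ℝ) ≠ 0 := by positivity
  simp only [lamBL] at h
  field_simp at h
  have hlt : (k : ℝ) + l < N + 1 := by exact_mod_cast (by omega : k + l < N + 1)
  have h3 : ((k : ℝ) - l) * (N + 1 - k - l) = 0 := by linear_combination -h
  rcases mul_eq_zero.mp h3 with h4 | h4
  · exact_mod_cast sub_eq_zero.mp h4
  · linarith

/-- The normalization `Δ_k` makes `w_k` a unit vector; `c_k(0) = 1` keeps the sum positive. -/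
lemma wBL_norm (N1 N2 Nw N : ℕ) (hN : N = N1 + N2)
    (hw2 : Nw ≤ N2) (k : ℕ) :
    ∑ i ∈ Finset.range (Nw + 1), wBL N1 N2 Nw N k i * wBL N1 N2 Nw N k i = 1 := by
  have hpi : ∀ i ∈ Finset.range (Nw + 1), 0 < piBL N1 Nw N i := fun i hi =>
    piBL_pos N1 N2 Nw N i hN hw2 (by simp only [Finset.mem_range] at hi; omega)
  have hpos : 0 < ∑ i ∈ Finset.range (Nw + 1), (cBL N1 N2 Nw k i) ^ 2 / piBL N1 Nw N i := by
    refine Finset.sum_pos' (fun i hi => div_nonneg (sq_nonneg _) (hpi i hi).le)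
      ⟨0, by simp, ?_⟩
    rw [cBL_zero]
    exact div_pos (by norm_num) (hpi 0 (by simp))
  have hterm : ∀ i ∈ Finset.range (Nw + 1), wBL N1 N2 Nw N k i * wBL N1 N2 Nw N k i
      = DeltaSqBL N1 N2 Nw N k * ((cBL N1 N2 Nw k i) ^ 2 / piBL N1 Nw N i) := by
    intro i hi
    have hD : DeltaBL N1 N2 Nw N k * DeltaBL N1 N2 Nw N k = DeltaSqBL N1 N2 Nw N k :=
      Real.mul_self_sqrt (inv_nonneg.mpr hpos.le)
    rw [wBL, div_mul_div_comm, Real.mul_self_sqrt (hpi i hi).le, ← hD]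
    ring
  rw [Finset.sum_congr rfl hterm, ← Finset.mul_sum, DeltaSqBL]
  exact inv_mul_cancel₀ hpos.ne'

/-- Eigenvectors of the symmetric matrix `Z` for different eigenvalues are orthogonal. -/
lemma wBL_orth (N1 N2 Nw Nb N : ℕ)
    (hN1 : 1 ≤ N1) (hN2 : 1 ≤ N2) (hN : N = N1 + N2) (hwb : Nw + Nb = N)
    (hw1 : Nw ≤ N1) (hw2 : Nw ≤ N2) (k l : ℕ) (hk : k ≤ Nw) (hl : l ≤ Nw) (hkl : k ≠ l) :
    ∑ i ∈ Finset.range (Nw + 1), wBL N1 N2 Nw N k i * wBL N1 N2 Nw N l i = 0 := by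
  rw [← Fin.sum_univ_eq_sum_range (fun i => wBL N1 N2 Nw N k i * wBL N1 N2 Nw N l i)]
  have hl' : ∑ i : Fin (Nw + 1), ∑ j : Fin (Nw + 1),
      ZBL N1 N2 Nw Nb N i j * wBL N1 N2 Nw N l j * wBL N1 N2 Nw N k i
      = lamBL N1 N2 N l * ∑ i : Fin (Nw + 1), wBL N1 N2 Nw N k i * wBL N1 N2 Nw N l i := by
    rw [Finset.mul_sum]
    refine Finset.sum_congr rfl fun i _ => ?_
    rw [← Finset.sum_mul, ZBL_mul_wBL N1 N2 Nw Nb N hN1 hN2 hN hwb hw2 l hl i]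
    ring
  have hk' : ∑ i : Fin (Nw + 1), ∑ j : Fin (Nw + 1),
      ZBL N1 N2 Nw Nb N i j * wBL N1 N2 Nw N l j * wBL N1 N2 Nw N k i
      = lamBL N1 N2 N k * ∑ i : Fin (Nw + 1), wBL N1 N2 Nw N k i * wBL N1 N2 Nw N l i := by
    rw [Finset.mul_sum, Finset.sum_comm]
    refine Finset.sum_congr rfl fun j _ => ?_
    rw [← mul_assoc, ← ZBL_mul_wBL N1 N2 Nw Nb N hN1 hN2 hN hwb hw2 k hk j, Finset.sum_mul]
    refine Finset.sum_congr rfl fun i _ => ?_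
    rw [ZBL_symm N1 N2 Nw Nb N hN hwb hw1 hw2 i j]
    ring
  have hne : lamBL N1 N2 N k - lamBL N1 N2 N l ≠ 0 := fun h =>
    hkl (lamBL_inj N1 N2 Nw N hN1 hN2 hN hw1 hw2 k l hk hl (sub_eq_zero.mp h))
  refine (mul_eq_zero.mp ?_).resolve_left hne
  linear_combination hl' - hk'

/-- The `w_k = Δ_k c_k / √π` form an orthonormal system of eigenvectors of the
symmetrized matrix `Z`, with eigenvalues `λ_k`. -/
theorem BL_symmetrized_orthonormal_eigenvectors
    (N1 N2 Nw Nb N : ℕ)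
    (hN1 : 1 ≤ N1) (hN2 : 1 ≤ N2) (hN : N = N1 + N2) (hwb : Nw + Nb = N)
    (hw1 : Nw ≤ N1) (hw2 : Nw ≤ N2) :
    (∀ k l : ℕ, k ≤ Nw → l ≤ Nw →
      ∑ i ∈ Finset.range (Nw + 1), wBL N1 N2 Nw N k i * wBL N1 N2 Nw N l i
        = if k = l then 1 else 0)
    ∧ (∀ k : ℕ, k ≤ Nw → ∀ i : Fin (Nw + 1),
        ∑ j : Fin (Nw + 1), ZBL N1 N2 Nw Nb N i j * wBL N1 N2 Nw N k j
          = lamBL N1 N2 N k * wBL N1 N2 Nw N k i) := by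
  refine ⟨fun k l hk hl => ?_, fun k hk i =>
    ZBL_mul_wBL N1 N2 Nw Nb N hN1 hN2 hN hwb hw2 k hk i⟩
  split_ifs with h
  · subst h
    exact wBL_norm N1 N2 Nw N hN hw2 k
  · exact wBL_orth N1 N2 Nw Nb N hN1 hN2 hN hwb hw1 hw2 k l hk hl h
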